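/- Let d ≥ 1, 1 ≤ p < ∞, 1 ≤ r < ∞ and s > d/r. Set α̃ = 2s/(2s+d) if r > pd/(2s+d), and α̃ = 2(s − d/r + d/p)/(2(s − d/r) + d) otherwise. Then for every ε with 0 < ε < 1 − α̃, the set { c ∈ b^{s,∞}_r : c ∈ W((1−α̃−ε)p, p) } is a Haar-null subset of b^{s,∞}_r. -/

import Mathlib

/-!
`W(w,p)` is a linear subspace of the space of sequences, and its quasi-norm is lower semicontinuous
for the product topology, as a supremum of sums of counting functions of open conditions. Hence
`W(w,p) ∩ b^{s,∞}_r` is a Borel linear subspace of `b^{s,∞}_r`, and it is Haar-null as soon as it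
misses some `g ∈ b^{s,∞}_r`: the segment `{t g : 0 ≤ t ≤ 1}` meets each of its translates at most
once, so the uniform measure on this segment charges none of them.

The sequence `g` has constant size `2^{-βj}` on `2^{γj}` positions at level `j`, with
`β = s - d/r + d/2 + γ/r` so that its Besov quasi-norm is `1`. Testing at `λ = 2^{-βj}/2` shows that
`g ∉ W(w,p)` when `βw < dp/2 - d + γ`. This condition is affine in `γ ∈ [0,d]`, so only the
endpoints matter: `γ = d` (all positions) gives the first regime of `α̃`, and `γ = 0` (one position
per level) gives the second one.
-/

open MeasureTheory
open scoped ENNReal BigOperators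

/-- The space of wavelet-type coefficient sequences `c = (c_{j,k})`, `j ∈ ℕ`,
`k ∈ {0,…,2^j−1}^d`. -/
abbrev BSeq (d : ℕ) := (j : ℕ) → (Fin d → Fin (2 ^ j)) → ℝ

/-- The `j`-th term `2^{(s−d/r+d/2)j} (Σ_k |c_{j,k}|^r)^{1/r}` of the Besov quasi-norm. -/
noncomputable def besovNormAt (d : ℕ) (s r : ℝ) (c : BSeq d) (j : ℕ) : ℝ :=
  (2 : ℝ) ^ ((s - (d : ℝ) / r + (d : ℝ) / 2) * (j : ℝ)) *
    (∑ k : Fin d → Fin (2 ^ j), |c j k| ^ r) ^ (1 / r)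

/-- Membership in the Besov sequence space `b^{s,∞}_r`:
`sup_j 2^{(s−d/r+d/2)j} (Σ_k |c_{j,k}|^r)^{1/r} < ∞`. -/
def MemBesov (d : ℕ) (s r : ℝ) (c : BSeq d) : Prop :=
  ∃ C : ℝ, ∀ j : ℕ, besovNormAt d s r c j ≤ C

/-- The weak Besov quasi-norm
`‖c‖_{W(w,p)} = sup_{λ>0} λ^w Σ_{j≥0} 2^{j(dp/2−d)} #{k : |c_{j,k}| > λ}`, valued in `[0,∞]`. -/
noncomputable def wBesovNorm (d : ℕ) (w p : ℝ) (c : BSeq d) : ℝ≥0∞ :=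
  ⨆ lam : Set.Ioi (0 : ℝ),
    ENNReal.ofReal ((lam : ℝ) ^ w) *
      ∑' j : ℕ, ENNReal.ofReal ((2 : ℝ) ^ (((d : ℝ) * p / 2 - (d : ℝ)) * (j : ℝ))) *
        (Nat.card {k : Fin d → Fin (2 ^ j) // (lam : ℝ) < |c j k|} : ℝ≥0∞)

/-- Membership in the weak Besov sequence space `W(w,p)`. -/
def MemWBesov (d : ℕ) (w p : ℝ) (c : BSeq d) : Prop :=
  wBesovNorm d w p c ≠ ⊤

/-- The Besov sequence space `b^{s,∞}_r` as a type. -/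
def BesovSp (d : ℕ) (s r : ℝ) := {c : BSeq d // MemBesov d s r c}

/-- The extended distance on sequences associated with the Besov quasi-norm. -/
noncomputable def besovEDist (d : ℕ) (s r : ℝ) (c c' : BSeq d) : ℝ≥0∞ :=
  ⨆ j : ℕ, ENNReal.ofReal (besovNormAt d s r (c - c') j)

/-- A set `S ⊆ b^{s,∞}_r` is Haar-null (relative to a topology `τ` on `b^{s,∞}_r`) if it is
contained in a Borel set `A` carrying a compactly supported Borel probability measure `μ`
all of whose translates of `A` are null. -/
def IsHaarNullBesov (d : ℕ) (s r : ℝ) (τ : TopologicalSpace (BesovSp d s r))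
    (S : Set (BesovSp d s r)) : Prop :=
  ∃ A : Set (BesovSp d s r), S ⊆ A ∧ MeasurableSet[@borel _ τ] A ∧
    ∃ μ : @Measure (BesovSp d s r) (@borel _ τ),
      @IsProbabilityMeasure _ (@borel _ τ) μ ∧
      (∃ K : Set (BesovSp d s r), @IsCompact _ τ K ∧ μ Kᶜ = 0) ∧
      ∀ x : BesovSp d s r, μ {y : BesovSp d s r | ∃ a ∈ A, y.1 = x.1 + a.1} = 0

/-- `τ` is the quasi-norm topology of `b^{s,∞}_r`: around every point, the balls of
`besovEDist` form a basis of neighbourhoods. -/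
def IsBesovTopology (d : ℕ) (s r : ℝ) (τ : TopologicalSpace (BesovSp d s r)) : Prop :=
  ∀ x : BesovSp d s r, (@nhds _ τ x).HasBasis (fun ε : ℝ≥0∞ => 0 < ε)
    (fun ε => {y : BesovSp d s r | besovEDist d s r x.1 y.1 < ε})

/-- The minimax exponent `α̃`. -/
noncomputable def alphaTilde (d : ℕ) (s r p : ℝ) : ℝ :=
  if p * (d : ℝ) / (2 * s + (d : ℝ)) < r then 2 * s / (2 * s + (d : ℝ))
  else 2 * (s - (d : ℝ) / r + (d : ℝ) / p) / (2 * (s - (d : ℝ) / r) + (d : ℝ))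

/-- The irreducibility index `J(j,k)`: the smallest `J` such that `k = 2^{j−J} K` for some
`K ∈ {0,…,2^J−1}^d`, i.e. the smallest `J` with `2^{j−J} ∣ k_i` for all `i`. -/
def irredIndex (d : ℕ) (j : ℕ) (k : Fin d → Fin (2 ^ j)) : ℕ :=
  Nat.find (p := fun J : ℕ => ∀ i : Fin d, 2 ^ (j - J) ∣ (k i : ℕ)) ⟨j, fun i => by simp⟩

/-- The saturating sequence `g`, with `g_{j,k} = j^{−(1+3/r)} 2^{−(s−d/r+d/2)j} 2^{−(d/r)J(j,k)}`
for `j ≥ 1` and `g_{0,k} = 0`. -/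
noncomputable def gSeq (d : ℕ) (s r : ℝ) : BSeq d := fun j k =>
  if j = 0 then 0
  else (j : ℝ) ^ (-(1 + 3 / r)) * (2 : ℝ) ^ (-(s - (d : ℝ) / r + (d : ℝ) / 2) * (j : ℝ)) *
    (2 : ℝ) ^ (-((d : ℝ) / r) * (irredIndex d j k : ℝ))

section ExceedanceCount

variable {ι : Type*}

/-- The distribution function of a family of reals for the counting measure: the number of entries
exceeding `lam` in absolute value (`0` if there are infinitely many). -/
noncomputable def exceedanceCount (f : ι → ℝ) (lam : ℝ) : ℕ :=
  Nat.card {i // lam < |f i|}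

lemma exceedanceCount_zero {lam : ℝ} (hlam : 0 ≤ lam) : exceedanceCount (0 : ι → ℝ) lam = 0 := by
  simp [exceedanceCount, hlam.not_gt]

lemma exceedanceCount_smul {t : ℝ} (ht : t ≠ 0) (f : ι → ℝ) (lam : ℝ) :
    exceedanceCount (t • f) lam = exceedanceCount f (lam / |t|) := by
  simp only [exceedanceCount, Pi.smul_apply, smul_eq_mul, abs_mul, div_lt_iff₀' (abs_pos.2 ht)]

lemma exceedanceCount_add_le [Finite ι] (f g : ι → ℝ) (lam : ℝ) :
    exceedanceCount (f + g) lam ≤ exceedanceCount f (lam / 2) + exceedanceCount g (lam / 2) := by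
  have hsub : {i | lam < |(f + g) i|} ⊆ {i | lam / 2 < |f i|} ∪ {i | lam / 2 < |g i|} := by
    intro i hi
    by_contra! hfg
    simp only [Set.mem_union, Set.mem_ofPred_eq, not_or, not_lt] at hi hfg
    rw [Pi.add_apply] at hi
    linarith [abs_add_le (f i) (g i)]
  exact (Set.ncard_le_ncard hsub).trans (Set.ncard_union_le _ _)

lemma lowerSemicontinuous_exceedanceCount [Finite ι] (lam : ℝ) :
    LowerSemicontinuous fun f : ι → ℝ => exceedanceCount f lam := by
  intro f n hn
  have hpersist : ∀ᶠ g : ι → ℝ in nhds f, ∀ i, lam < |f i| → lam < |g i| :=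
    Filter.eventually_all.2 fun i => Filter.eventually_imp_distrib_left.2
      ((continuous_apply i).abs.continuousAt.eventually_const_lt ·)
  filter_upwards [hpersist] with g hg
  exact hn.trans_le (Set.ncard_le_ncard (s := {i | lam < |f i|}) hg)

end ExceedanceCount

section WeakBesov

variable {d : ℕ} {w p : ℝ}

/-- The distribution function `λ ↦ Σ_j 2^{j(dp/2−d)} #{k : |c_{j,k}| > λ}` of a sequence, whose weak
`ℓ^w` quasi-norm is the quasi-norm of `W(w,p)`. -/
noncomputable def weightedDistribution (d : ℕ) (p : ℝ) (c : BSeq d) (lam : ℝ) : ℝ≥0∞ :=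
  ∑' j : ℕ, ENNReal.ofReal ((2 : ℝ) ^ (((d : ℝ) * p / 2 - (d : ℝ)) * (j : ℝ))) *
    exceedanceCount (c j) lam

lemma wBesovNorm_eq_iSup_weightedDistribution (d : ℕ) (w p : ℝ) (c : BSeq d) :
    wBesovNorm d w p c = ⨆ lam : Set.Ioi (0 : ℝ),
      ENNReal.ofReal ((lam : ℝ) ^ w) * weightedDistribution d p c lam :=
  rfl

lemma weightedDistribution_add_le (c c' : BSeq d) (lam : ℝ) :
    weightedDistribution d p (c + c') lam ≤
      weightedDistribution d p c (lam / 2) + weightedDistribution d p c' (lam / 2) := by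
  simp only [weightedDistribution, ← ENNReal.tsum_add, ← mul_add]
  gcongr with j
  exact_mod_cast exceedanceCount_add_le (c j) (c' j) lam

lemma weightedDistribution_smul {t : ℝ} (ht : t ≠ 0) (c : BSeq d) (lam : ℝ) :
    weightedDistribution d p (t • c) lam = weightedDistribution d p c (lam / |t|) := by
  simp only [weightedDistribution, Pi.smul_apply, exceedanceCount_smul ht]

lemma lowerSemicontinuous_weightedDistribution (lam : ℝ) :
    LowerSemicontinuous fun c : BSeq d => weightedDistribution d p c lam := by
  refine lowerSemicontinuous_tsum fun j => ?_
  let φ (n : ℕ) : ℝ≥0∞ :=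
    ENNReal.ofReal ((2 : ℝ) ^ (((d : ℝ) * p / 2 - (d : ℝ)) * (j : ℝ))) * n
  have hφ : Monotone φ := fun m n hmn => by dsimp only [φ]; gcongr
  exact (continuous_of_discreteTopology (f := φ)).comp_lowerSemicontinuous
    ((lowerSemicontinuous_exceedanceCount lam).comp (continuous_apply j)) hφ

lemma lowerSemicontinuous_wBesovNorm (d : ℕ) (w p : ℝ) :
    LowerSemicontinuous (wBesovNorm d w p) :=
  lowerSemicontinuous_iSup fun lam =>
    (ENNReal.continuous_const_mul ENNReal.ofReal_ne_top).comp_lowerSemicontinuous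
      (lowerSemicontinuous_weightedDistribution (lam : ℝ)) mul_right_mono

lemma ofReal_rpow_mul_weightedDistribution_div_le {a lam : ℝ} (ha : 0 < a) (hlam : 0 < lam)
    (c : BSeq d) :
    ENNReal.ofReal (lam ^ w) * weightedDistribution d p c (lam / a) ≤
      ENNReal.ofReal (a ^ w) * wBesovNorm d w p c := by
  have hsplit : lam ^ w = a ^ w * (lam / a) ^ w := by
    rw [← Real.mul_rpow ha.le (by positivity), mul_div_cancel₀ _ ha.ne']
  rw [hsplit, ENNReal.ofReal_mul (by positivity), mul_assoc,
    wBesovNorm_eq_iSup_weightedDistribution]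
  gcongr
  exact le_iSup (fun lam : Set.Ioi (0 : ℝ) =>
    ENNReal.ofReal ((lam : ℝ) ^ w) * weightedDistribution d p c lam) ⟨lam / a, div_pos hlam ha⟩

lemma wBesovNorm_zero (d : ℕ) (w p : ℝ) : wBesovNorm d w p 0 = 0 := by
  simp only [wBesovNorm_eq_iSup_weightedDistribution, ENNReal.iSup_eq_zero]
  rintro ⟨lam, hlam : 0 < lam⟩
  simp [weightedDistribution, exceedanceCount_zero hlam.le]

lemma wBesovNorm_add_le (c c' : BSeq d) :
    wBesovNorm d w p (c + c') ≤
      ENNReal.ofReal (2 ^ w) * (wBesovNorm d w p c + wBesovNorm d w p c') := by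
  refine iSup_le fun ⟨lam, hlam⟩ => ?_
  calc ENNReal.ofReal (lam ^ w) * weightedDistribution d p (c + c') lam
    _ ≤ ENNReal.ofReal (lam ^ w) *
        (weightedDistribution d p c (lam / 2) + weightedDistribution d p c' (lam / 2)) := by
      gcongr
      exact weightedDistribution_add_le c c' lam
    _ ≤ ENNReal.ofReal (2 ^ w) * (wBesovNorm d w p c + wBesovNorm d w p c') := by
      rw [mul_add, mul_add]
      exact add_le_add (ofReal_rpow_mul_weightedDistribution_div_le two_pos hlam c)
        (ofReal_rpow_mul_weightedDistribution_div_le two_pos hlam c')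

lemma wBesovNorm_smul_le {t : ℝ} (ht : t ≠ 0) (c : BSeq d) :
    wBesovNorm d w p (t • c) ≤ ENNReal.ofReal (|t| ^ w) * wBesovNorm d w p c := by
  rw [wBesovNorm_eq_iSup_weightedDistribution]
  refine iSup_le fun ⟨lam, hlam⟩ => ?_
  rw [weightedDistribution_smul ht]
  exact ofReal_rpow_mul_weightedDistribution_div_le (abs_pos.2 ht) hlam c

/-- The weak Besov sequence space `W(w,p)` as a linear subspace of the space of all sequences. -/
noncomputable def wBesovSubmodule (d : ℕ) (w p : ℝ) : Submodule ℝ (BSeq d) where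
  carrier := {c | MemWBesov d w p c}
  zero_mem' := by simp [MemWBesov, wBesovNorm_zero]
  add_mem' {c c'} hc hc' := ne_top_of_le_ne_top
    (ENNReal.mul_ne_top ENNReal.ofReal_ne_top (ENNReal.add_ne_top.2 ⟨hc, hc'⟩))
    (wBesovNorm_add_le c c')
  smul_mem' t c hc := by
    rcases eq_or_ne t 0 with rfl | ht
    · simp [MemWBesov, wBesovNorm_zero]
    · exact ne_top_of_le_ne_top (ENNReal.mul_ne_top ENNReal.ofReal_ne_top hc)
        (wBesovNorm_smul_le ht c)

lemma ofReal_mul_exceedanceCount_le_wBesovNorm {lam : ℝ} (hlam : 0 < lam) (c : BSeq d) (j : ℕ) :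
    ENNReal.ofReal (lam ^ w * ((2 : ℝ) ^ (((d : ℝ) * p / 2 - (d : ℝ)) * (j : ℝ)) *
      exceedanceCount (c j) lam)) ≤ wBesovNorm d w p c := by
  have hnorm : ENNReal.ofReal (lam ^ w) * weightedDistribution d p c lam ≤ wBesovNorm d w p c := by
    simpa using ofReal_rpow_mul_weightedDistribution_div_le (w := w) (p := p) one_pos hlam c
  refine le_trans ?_ hnorm
  rw [ENNReal.ofReal_mul (by positivity), ENNReal.ofReal_mul (by positivity),
    ENNReal.ofReal_natCast]
  gcongr
  exact ENNReal.le_tsum (f := fun j : ℕ =>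
    ENNReal.ofReal ((2 : ℝ) ^ (((d : ℝ) * p / 2 - (d : ℝ)) * (j : ℝ))) *
      (exceedanceCount (c j) lam : ℝ≥0∞)) j

end WeakBesov

section BesovTopology

variable {d : ℕ} {s r : ℝ}

lemma rpow_mul_abs_le_besovNormAt (hr : 0 < r) (c : BSeq d) (j : ℕ) (k : Fin d → Fin (2 ^ j)) :
    (2 : ℝ) ^ ((s - (d : ℝ) / r + (d : ℝ) / 2) * (j : ℝ)) * |c j k| ≤ besovNormAt d s r c j := by
  unfold besovNormAt
  gcongr
  calc |c j k| = (|c j k| ^ r) ^ (1 / r) := by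
        rw [one_div, Real.rpow_rpow_inv (abs_nonneg _) hr.ne']
    _ ≤ (∑ k, |c j k| ^ r) ^ (1 / r) := by
        gcongr
        exact Finset.single_le_sum (f := fun k => |c j k| ^ r)
          (fun _ _ => by positivity) (Finset.mem_univ k)

lemma besovNormAt_smul (hr : 0 < r) (t : ℝ) (c : BSeq d) (j : ℕ) :
    besovNormAt d s r (t • c) j = |t| * besovNormAt d s r c j := by
  simp only [besovNormAt, Pi.smul_apply, smul_eq_mul, abs_mul,
    Real.mul_rpow (abs_nonneg t) (abs_nonneg _), ← Finset.mul_sum]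
  rw [Real.mul_rpow (by positivity) (by positivity), one_div,
    Real.rpow_rpow_inv (abs_nonneg _) hr.ne', mul_left_comm]

lemma MemBesov.smul (hr : 0 < r) {g : BSeq d} (hg : MemBesov d s r g) (t : ℝ) :
    MemBesov d s r (t • g) := by
  obtain ⟨C, hC⟩ := hg
  refine ⟨|t| * C, fun j => ?_⟩
  rw [besovNormAt_smul hr]
  gcongr
  exact hC j

/-- The line `t ↦ t g` in `b^{s,∞}_r`, whose unit segment supports the measures used to detect
Haar-null sets. -/
def besovLine (hr : 0 < r) {g : BSeq d} (hg : MemBesov d s r g) (t : ℝ) : BesovSp d s r :=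
  ⟨t • g, hg.smul hr t⟩

variable {τ : TopologicalSpace (BesovSp d s r)}

lemma IsBesovTopology.continuous_val (hτ : IsBesovTopology d s r τ) (hr : 0 < r) :
    Continuous fun c : BesovSp d s r => c.1 := by
  refine continuous_pi fun j => continuous_pi fun k => continuous_iff_continuousAt.2 fun x => ?_
  refine ((hτ x).tendsto_iff Metric.nhds_basis_ball).2 fun δ hδ => ?_
  set B := (2 : ℝ) ^ ((s - (d : ℝ) / r + (d : ℝ) / 2) * (j : ℝ))
  have hB : 0 < B := by positivity
  refine ⟨ENNReal.ofReal (B * δ), ENNReal.ofReal_pos.2 (mul_pos hB hδ), fun y hy => ?_⟩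
  have hlevel : besovNormAt d s r (x.1 - y.1) j < B * δ :=
    (ENNReal.ofReal_lt_ofReal_iff (mul_pos hB hδ)).1
      ((le_iSup (fun j => ENNReal.ofReal (besovNormAt d s r (x.1 - y.1) j)) j).trans_lt hy)
  have hcoeff : |x.1 j k - y.1 j k| < δ :=
    lt_of_mul_lt_mul_left ((rpow_mul_abs_le_besovNormAt hr (x.1 - y.1) j k).trans_lt hlevel) hB.le
  rwa [Metric.mem_ball, dist_comm, Real.dist_eq]

lemma IsBesovTopology.continuous_besovLine (hτ : IsBesovTopology d s r τ) (hr : 0 < r)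
    {g : BSeq d} (hg : MemBesov d s r g) : Continuous (besovLine hr hg) := by
  obtain ⟨C, hC⟩ := id hg
  refine continuous_iff_continuousAt.2 fun t => ?_
  refine (hτ _).tendsto_right_iff.2 fun δ hδ => ?_
  have hdist (u : ℝ) : besovEDist d s r (t • g) (u • g) ≤ ENNReal.ofReal (|t - u| * C) := by
    refine iSup_le fun j => ENNReal.ofReal_le_ofReal ?_
    rw [← sub_smul, besovNormAt_smul hr]
    gcongr
    exact hC j
  have hlim : Filter.Tendsto (fun u : ℝ => ENNReal.ofReal (|t - u| * C)) (nhds t) (nhds 0) := by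
    have hcont : Continuous fun u : ℝ => ENNReal.ofReal (|t - u| * C) :=
      ENNReal.continuous_ofReal.comp (by fun_prop)
    simpa using hcont.tendsto t
  filter_upwards [hlim.eventually_lt_const hδ] with u hu
  exact (hdist u).trans_lt hu

end BesovTopology

section HaarNull

lemma subsingleton_setOf_smul_mem_coset {K E : Type*} [DivisionRing K] [AddCommGroup E] [Module K E]
    {V : Submodule K E} {g : E} (hg : g ∉ V) (x : E) :
    {t : K | ∃ v ∈ V, t • g = x + v}.Subsingleton := by
  rintro t ⟨a, ha, hta⟩ u ⟨b, hb, hub⟩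
  by_contra htu
  have hdiff : (t - u) • g = a - b := by rw [sub_smul, hta, hub, add_sub_add_left_eq_sub]
  exact hg ((V.smul_mem_iff (sub_ne_zero.2 htu)).1 (hdiff ▸ V.sub_mem ha hb))

lemma exists_compactlySupported_null_of_subsingleton_preimage {α X : Type*}
    [TopologicalSpace α] [CompactSpace α] [MeasurableSpace α] [OpensMeasurableSpace α]
    (ν : Measure α) [IsProbabilityMeasure ν] [NullSingletonClass ν]
    [TopologicalSpace X] [T2Space X] [MeasurableSpace X] [BorelSpace X]
    {f : α → X} (hf : Continuous f) :
    ∃ μ : Measure X, IsProbabilityMeasure μ ∧ (∃ K, IsCompact K ∧ μ Kᶜ = 0) ∧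
      ∀ T : Set X, (f ⁻¹' T).Subsingleton → μ T = 0 := by
  have hK : IsCompact (Set.range f) := isCompact_range hf
  have hnull : ν.map f (Set.range f)ᶜ = 0 := by
    rw [Measure.map_apply hf.measurable hK.measurableSet.compl]
    simp
  refine ⟨ν.map f, Measure.isProbabilityMeasure_map hf.aemeasurable, ⟨_, hK, hnull⟩, fun T hT => ?_⟩
  -- `T` need not be measurable, but its trace on the range of `f` is at most a singleton
  have htrace : ν.map f (T ∩ Set.range f) = 0 := by
    have hsub : (T ∩ Set.range f).Subsingleton := Set.image_preimage_eq_inter_range ▸ hT.image f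
    rw [Measure.map_apply hf.measurable hsub.measurableSet, Set.preimage_inter_range]
    exact hT.measure_zero ν
  refine measure_mono_null (fun y hy => ?_) (measure_union_null htrace hnull)
  exact (em (y ∈ Set.range f)).imp (⟨hy, ·⟩) id

variable {d : ℕ} {s r : ℝ} {τ : TopologicalSpace (BesovSp d s r)}

theorem isHaarNullBesov_submodule_of_notMem (hr : 0 < r) (hτ : IsBesovTopology d s r τ)
    {V : Submodule ℝ (BSeq d)} (hV : MeasurableSet[@borel _ τ] {c : BesovSp d s r | c.1 ∈ V})
    {g : BSeq d} (hg : MemBesov d s r g) (hgV : g ∉ V) :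
    IsHaarNullBesov d s r τ {c | c.1 ∈ V} := by
  let : MeasurableSpace (BesovSp d s r) := borel _
  have : BorelSpace (BesovSp d s r) := ⟨rfl⟩
  have : T2Space (BesovSp d s r) :=
    T2Space.of_injective_continuous Subtype.val_injective (hτ.continuous_val hr)
  have hsegment : Continuous fun t : unitInterval => besovLine hr hg t :=
    (hτ.continuous_besovLine hr hg).comp continuous_subtype_val
  obtain ⟨μ, hμ, hK, hnull⟩ :=
    exists_compactlySupported_null_of_subsingleton_preimage (volume : Measure unitInterval) hsegment
  refine ⟨_, subset_rfl, hV, μ, hμ, hK, fun x => hnull _ ?_⟩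
  rintro t ⟨a, ha, hta⟩ u ⟨b, hb, hub⟩
  exact Subtype.ext
    (subsingleton_setOf_smul_mem_coset hgV x.1 ⟨a.1, ha, hta⟩ ⟨b.1, hb, hub⟩)

theorem isHaarNullBesov_memWBesov_of_notMem {w p : ℝ} (hr : 0 < r) (hτ : IsBesovTopology d s r τ)
    {g : BSeq d} (hg : MemBesov d s r g) (hgW : ¬ MemWBesov d w p g) :
    IsHaarNullBesov d s r τ {c | MemWBesov d w p c.1} := by
  let : MeasurableSpace (BesovSp d s r) := borel _
  have : BorelSpace (BesovSp d s r) := ⟨rfl⟩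
  have hmeas : Measurable fun c : BesovSp d s r => wBesovNorm d w p c.1 :=
    ((lowerSemicontinuous_wBesovNorm d w p).comp (hτ.continuous_val hr)).measurable
  exact isHaarNullBesov_submodule_of_notMem (V := wBesovSubmodule d w p) hr hτ
    (hmeas (measurableSet_singleton ⊤).compl) hg hgW

end HaarNull

section FlatSequence

variable {d : ℕ} {s r w p β γ : ℝ} {F : (j : ℕ) → Finset (Fin d → Fin (2 ^ j))}

open Classical in
/-- The sequence equal to `2^{-βj}` at the positions `F j` of level `j` and vanishing elsewhere;
dense and sparse choices of `F` saturate the two regimes of the weak Besov scale. -/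
noncomputable def flatSeq (β : ℝ) (F : (j : ℕ) → Finset (Fin d → Fin (2 ^ j))) : BSeq d :=
  fun j k => if k ∈ F j then 2 ^ (-β * (j : ℝ)) else 0

lemma besovNormAt_flatSeq (hr : 0 < r) (j : ℕ) :
    besovNormAt d s r (flatSeq β F) j =
      2 ^ ((s - (d : ℝ) / r + (d : ℝ) / 2 - β) * (j : ℝ)) * ((F j).card : ℝ) ^ (1 / r) := by
  have hterm (k : Fin d → Fin (2 ^ j)) :
      |flatSeq β F j k| ^ r = if k ∈ F j then ((2 : ℝ) ^ (-β * (j : ℝ))) ^ r else 0 := by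
    unfold flatSeq
    split_ifs
    · rw [abs_of_pos (by positivity)]
    · rw [abs_zero, Real.zero_rpow hr.ne']
  have hsum : ∑ k, |flatSeq β F j k| ^ r = (F j).card * ((2 : ℝ) ^ (-β * (j : ℝ))) ^ r := by
    simp only [hterm, Finset.sum_ite_mem, Finset.univ_inter, Finset.sum_const, nsmul_eq_mul]
  rw [besovNormAt, hsum, Real.mul_rpow (by positivity) (by positivity), one_div,
    Real.rpow_rpow_inv (by positivity) hr.ne', mul_left_comm, ← Real.rpow_add two_pos, mul_comm,
    ← add_mul, ← sub_eq_add_neg]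

lemma memBesov_flatSeq (hr : 0 < r) (hF : ∀ j : ℕ, ((F j).card : ℝ) ≤ 2 ^ (γ * (j : ℝ)))
    (hβ : s - (d : ℝ) / r + (d : ℝ) / 2 + γ / r ≤ β) : MemBesov d s r (flatSeq β F) := by
  refine ⟨1, fun j => ?_⟩
  calc besovNormAt d s r (flatSeq β F) j
    _ ≤ 2 ^ ((s - (d : ℝ) / r + (d : ℝ) / 2 - β) * (j : ℝ)) *
        ((2 : ℝ) ^ (γ * (j : ℝ))) ^ (1 / r) := by
      rw [besovNormAt_flatSeq hr]
      gcongr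
      exact hF j
    _ = 2 ^ ((s - (d : ℝ) / r + (d : ℝ) / 2 + γ / r - β) * (j : ℝ)) := by
      rw [← Real.rpow_mul two_pos.le, ← Real.rpow_add two_pos]
      ring_nf
    _ ≤ 1 := Real.rpow_le_one_of_one_le_of_nonpos one_le_two
      (mul_nonpos_of_nonpos_of_nonneg (by linarith) j.cast_nonneg)

lemma exceedanceCount_flatSeq {j : ℕ} {lam : ℝ} (hlam : 0 ≤ lam)
    (hlam' : lam < 2 ^ (-β * (j : ℝ))) : exceedanceCount (flatSeq β F j) lam = (F j).card := by
  have hiff (k : Fin d → Fin (2 ^ j)) : lam < |flatSeq β F j k| ↔ k ∈ F j := by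
    unfold flatSeq
    split_ifs with hk
    · simpa only [hk, iff_true, abs_of_pos (show (0 : ℝ) < 2 ^ (-β * (j : ℝ)) by positivity)]
    · simpa [hk] using hlam
  simp only [exceedanceCount, hiff, Nat.card_eq_fintype_card, Fintype.card_coe]

lemma wBesovNorm_flatSeq_eq_top (hF : ∀ j : ℕ, 2 ^ (γ * (j : ℝ)) ≤ ((F j).card : ℝ))
    (hw : β * w < (d : ℝ) * p / 2 - d + γ) : wBesovNorm d w p (flatSeq β F) = ⊤ := by
  set η := (d : ℝ) * p / 2 - d + γ - β * w with hη
  have hlower (j : ℕ) : ENNReal.ofReal ((1 / 2) ^ w * ((2 : ℝ) ^ η) ^ j) ≤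
      wBesovNorm d w p (flatSeq β F) := by
    have hpos : (0 : ℝ) < 2 ^ (-β * (j : ℝ)) := by positivity
    refine le_trans (ENNReal.ofReal_le_ofReal ?_) (ofReal_mul_exceedanceCount_le_wBesovNorm
      (lam := 1 / 2 * 2 ^ (-β * (j : ℝ))) (by positivity) _ j)
    rw [exceedanceCount_flatSeq (by positivity) (by linarith)]
    calc (1 / 2 : ℝ) ^ w * ((2 : ℝ) ^ η) ^ j
      _ = (1 / 2 * 2 ^ (-β * (j : ℝ))) ^ w *
          (2 ^ (((d : ℝ) * p / 2 - d) * (j : ℝ)) * 2 ^ (γ * (j : ℝ))) := by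
        rw [Real.mul_rpow (by positivity) hpos.le, mul_assoc, ← Real.rpow_natCast,
          ← Real.rpow_mul two_pos.le, ← Real.rpow_mul two_pos.le, ← Real.rpow_add two_pos,
          ← Real.rpow_add two_pos, hη]
        ring_nf
      _ ≤ (1 / 2 * 2 ^ (-β * (j : ℝ))) ^ w *
          (2 ^ (((d : ℝ) * p / 2 - d) * (j : ℝ)) * (F j).card) := by
        gcongr
        exact hF j
  have hdiverge : Filter.Tendsto (fun j : ℕ => ENNReal.ofReal ((1 / 2) ^ w * ((2 : ℝ) ^ η) ^ j))
      Filter.atTop (nhds ⊤) :=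
    ENNReal.tendsto_ofReal_atTop.comp <| (tendsto_pow_atTop_atTop_of_one_lt
      (Real.one_lt_rpow one_lt_two (by linarith))).const_mul_atTop (by positivity)
  exact top_le_iff.1 (le_of_tendsto' hdiverge hlower)

end FlatSequence

section Regimes

variable {d : ℕ} {s r w p : ℝ} {τ : TopologicalSpace (BesovSp d s r)}

theorem isHaarNullBesov_memWBesov_of_card {γ : ℝ} (hr : 0 < r) (hτ : IsBesovTopology d s r τ)
    {F : (j : ℕ) → Finset (Fin d → Fin (2 ^ j))}
    (hF : ∀ j : ℕ, ((F j).card : ℝ) = 2 ^ (γ * (j : ℝ)))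
    (hw : (s - (d : ℝ) / r + (d : ℝ) / 2 + γ / r) * w < (d : ℝ) * p / 2 - d + γ) :
    IsHaarNullBesov d s r τ {c | MemWBesov d w p c.1} :=
  isHaarNullBesov_memWBesov_of_notMem hr hτ (memBesov_flatSeq hr (fun j => (hF j).le) le_rfl)
    (not_not_intro (wBesovNorm_flatSeq_eq_top (fun j => (hF j).ge) hw))

theorem isHaarNullBesov_memWBesov_dense (hr : 0 < r) (hτ : IsBesovTopology d s r τ)
    (hw : (s + (d : ℝ) / 2) * w < (d : ℝ) * p / 2) :
    IsHaarNullBesov d s r τ {c | MemWBesov d w p c.1} := by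
  refine isHaarNullBesov_memWBesov_of_card (γ := d) (F := fun _ => Finset.univ) hr hτ
    (fun j => ?_) ?_
  · rw [← Nat.cast_mul, Real.rpow_natCast, mul_comm]
    simp [pow_mul]
  · convert hw using 1 <;> ring

theorem isHaarNullBesov_memWBesov_sparse (hr : 0 < r) (hτ : IsBesovTopology d s r τ)
    (hw : (s - (d : ℝ) / r + (d : ℝ) / 2) * w < (d : ℝ) * p / 2 - d) :
    IsHaarNullBesov d s r τ {c | MemWBesov d w p c.1} :=
  isHaarNullBesov_memWBesov_of_card (γ := 0) (F := fun _ => {0}) hr hτ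
    (fun j => by simp) (by simpa using hw)

end Regimes

theorem wBesov_haarNull_general (d : ℕ) {p r s : ℝ} (hp : 0 < p) (hr : 0 < r)
    (hs : (d : ℝ) / r - (d : ℝ) / 2 < s)
    {τ : TopologicalSpace (BesovSp d s r)} (hτ : IsBesovTopology d s r τ)
    {ε : ℝ} (hε : 0 < ε) :
    IsHaarNullBesov d s r τ
      {c : BesovSp d s r | MemWBesov d ((1 - alphaTilde d s r p - ε) * p) p c.1} := by
  unfold alphaTilde
  split_ifs
  · refine isHaarNullBesov_memWBesov_dense hr hτ ?_
    have hD : 0 < 2 * s + (d : ℝ) := by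
      have : 0 ≤ (d : ℝ) / r := by positivity
      linarith
    calc (s + (d : ℝ) / 2) * ((1 - 2 * s / (2 * s + d) - ε) * p)
      _ = (d : ℝ) * p / 2 - (2 * s + d) / 2 * (ε * p) := by
        linear_combination -(p / 2) * div_mul_cancel₀ (2 * s) hD.ne'
      _ < (d : ℝ) * p / 2 := sub_lt_self _ (by positivity)
  · refine isHaarNullBesov_memWBesov_sparse hr hτ ?_
    have hD : 0 < 2 * (s - (d : ℝ) / r) + d := by linarith
    generalize (d : ℝ) / r = q at hD ⊢
    calc (s - q + (d : ℝ) / 2) *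
          ((1 - 2 * (s - q + (d : ℝ) / p) / (2 * (s - q) + d) - ε) * p)
      _ = (d : ℝ) * p / 2 - d - (2 * (s - q) + d) / 2 * (ε * p) := by
        linear_combination -(p / 2) * div_mul_cancel₀ (2 * (s - q + (d : ℝ) / p)) hD.ne' -
          div_mul_cancel₀ (d : ℝ) hp.ne'
      _ < (d : ℝ) * p / 2 - d := sub_lt_self _ (by positivity)

/-- For `1 ≤ p < ∞`, `1 ≤ r < ∞`, `s > d/r` and `0 < ε < 1 − α̃`, the set of elements of
`b^{s,∞}_r` belonging to the weak Besov space `W((1−α̃−ε)p, p)` is Haar-null in `b^{s,∞}_r`. -/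
theorem wBesov_haarNull (d : ℕ) (hd : 1 ≤ d) (p r s : ℝ) (hp : 1 ≤ p) (hr : 1 ≤ r)
    (hs : (d : ℝ) / r < s)
    (τ : TopologicalSpace (BesovSp d s r)) (hτ : IsBesovTopology d s r τ)
    (ε : ℝ) (hε1 : 0 < ε) (hε2 : ε < 1 - alphaTilde d s r p) :
    IsHaarNullBesov d s r τ
      {c : BesovSp d s r |
        MemWBesov d ((1 - alphaTilde d s r p - ε) * p) p c.1} := by
  have hd0 : 0 < (d : ℝ) := by exact_mod_cast hd
  exact wBesov_haarNull_general d (by linarith) (by linarith) (by linarith) hτ hε1
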